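/- Let φ be an n-qubit stabilizer state and let P be an n-qubit Pauli string that commutes with every matrix A ∈ Pauli_n satisfying Aφ = φ. Then Pφ = φ or Pφ = −φ. -/

import Mathlib

open Matrix

noncomputable section

/-- The single-qubit Pauli matrices. -/
def pauliI : Matrix (Fin 2) (Fin 2) ℂ := 1
def pauliX : Matrix (Fin 2) (Fin 2) ℂ := !![0, 1; 1, 0]
def pauliY : Matrix (Fin 2) (Fin 2) ℂ := !![0, -Complex.I; Complex.I, 0]
def pauliZ : Matrix (Fin 2) (Fin 2) ℂ := !![1, 0; 0, -1]

/-- Kronecker product of a `2 × 2` matrix (most significant qubit) with a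
`2^m × 2^m` matrix, indexed by `Fin (2^(m+1))`. -/
def kron {m : ℕ} (A : Matrix (Fin 2) (Fin 2) ℂ) (B : Matrix (Fin (2 ^ m)) (Fin (2 ^ m)) ℂ) :
    Matrix (Fin (2 ^ (m + 1))) (Fin (2 ^ (m + 1))) ℂ := fun i j =>
  A (if (i : ℕ) < 2 ^ m then 0 else 1) (if (j : ℕ) < 2 ^ m then 0 else 1) *
    B ⟨(i : ℕ) % 2 ^ m, Nat.mod_lt _ (pow_pos (by norm_num) m)⟩
      ⟨(j : ℕ) % 2 ^ m, Nat.mod_lt _ (pow_pos (by norm_num) m)⟩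

/-- `IsPauliString n M` holds iff `M` is a Kronecker product of `n` single-qubit
Pauli matrices. -/
def IsPauliString : (n : ℕ) → Matrix (Fin (2 ^ n)) (Fin (2 ^ n)) ℂ → Prop
  | 0, M => M = 1
  | n + 1, M => ∃ Q ∈ ({pauliI, pauliX, pauliY, pauliZ} : Set (Matrix (Fin 2) (Fin 2) ℂ)),
      ∃ B, IsPauliString n B ∧ M = kron Q B

/-- An `n`-qubit Pauli LIM: a nonzero scalar multiple of an `n`-qubit Pauli string. -/
def IsPauliLIM (n : ℕ) (A : Matrix (Fin (2 ^ n)) (Fin (2 ^ n)) ℂ) : Prop :=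
  ∃ (c : ℂ) (P : Matrix (Fin (2 ^ n)) (Fin (2 ^ n)) ℂ),
    c ≠ 0 ∧ IsPauliString n P ∧ A = c • P

/-- The stabilizer set of a vector: all `n`-qubit Pauli LIMs fixing `φ`. -/
def PauliStab {n : ℕ} (φ : Fin (2 ^ n) → ℂ) : Set (Matrix (Fin (2 ^ n)) (Fin (2 ^ n)) ℂ) :=
  {A | IsPauliLIM n A ∧ A.mulVec φ = φ}

/-- Two vectors are Pauli-isomorphic if some Pauli LIM maps one to the other. -/
def PauliIso {n : ℕ} (φ ψ : Fin (2 ^ n) → ℂ) : Prop :=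
  ∃ A, IsPauliLIM n A ∧ A.mulVec φ = ψ

/-- Membership in the `n`-qubit Pauli group: `i^k · P` with `P` a Pauli string. -/
def InPauliGroup (n : ℕ) (A : Matrix (Fin (2 ^ n)) (Fin (2 ^ n)) ℂ) : Prop :=
  ∃ (k : Fin 4) (P : Matrix (Fin (2 ^ n)) (Fin (2 ^ n)) ℂ),
    IsPauliString n P ∧ A = (Complex.I ^ (k : ℕ)) • P

/-- The vector `|0⟩⊗φ₀ + |1⟩⊗φ₁`: first `2^m` coordinates are `φ₀`, last are `φ₁`. -/
def dirac {m : ℕ} (φ₀ φ₁ : Fin (2 ^ m) → ℂ) : Fin (2 ^ (m + 1)) → ℂ := fun i =>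
  if h : (i : ℕ) < 2 ^ m then φ₀ ⟨i, h⟩
  else φ₁ ⟨(i : ℕ) - 2 ^ m, by
    have h1 := i.isLt
    have h2 : (2 : ℕ) ^ (m + 1) = 2 ^ m + 2 ^ m := by rw [pow_succ]; omega
    omega⟩

/-- An `n`-qubit stabilizer state: a unit vector stabilized by exactly `2^n`
elements of the Pauli group. -/
def IsStabilizerState (n : ℕ) (φ : Fin (2 ^ n) → ℂ) : Prop :=
  (∑ i, Complex.normSq (φ i)) = 1 ∧
    Set.ncard {A : Matrix (Fin (2 ^ n)) (Fin (2 ^ n)) ℂ |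
      InPauliGroup n A ∧ A.mulVec φ = φ} = 2 ^ n

/-- The standard Hermitian inner product on `ℂ^N`. -/
def hinner {N : ℕ} (φ ψ : Fin N → ℂ) : ℂ :=
  ∑ i, (starRingEnd ℂ) (φ i) * ψ i



/-- `Z^{a_m} ⊗ ⋯ ⊗ Z^{a_1}` (the `j`-th tensor factor is `Z` iff `a j = true`). -/
def zString : (m : ℕ) → (Fin m → Bool) → Matrix (Fin (2 ^ m)) (Fin (2 ^ m)) ℂ
  | 0, _ => 1
  | m + 1, a => kron (if a (Fin.last m) then pauliZ else 1) (zString m (fun j => a j.castSucc))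

open Classical in
/-- Number of edges of `G` with both endpoints in the set of vertices
`j` with `x.testBit j = true`. -/
def edgeCount {n : ℕ} (G : SimpleGraph (Fin n)) (x : ℕ) : ℕ :=
  (Finset.univ.filter (fun p : Fin n × Fin n =>
    p.1 < p.2 ∧ G.Adj p.1 p.2 ∧ x.testBit p.1.val = true ∧ x.testBit p.2.val = true)).card

/-- The graph state of a simple graph on vertices `{0, …, n-1}`; vertex `j`
corresponds to the `j`-th bit of the basis-state index. -/
def graphState {n : ℕ} (G : SimpleGraph (Fin n)) : Fin (2 ^ n) → ℂ :=
  fun x => (-1 : ℂ) ^ edgeCount G (x : ℕ) / Real.sqrt (2 ^ n)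

/-- The subfunction of `f` of order `ℓ` obtained by fixing the first `ℓ`
arguments to `a`. -/
def subfun {N : ℕ} (f : (Fin N → Bool) → ℂ) (ℓ : ℕ) (a : Fin ℓ → Bool) :
    (Fin (N - ℓ) → Bool) → ℂ := fun x =>
  f (fun i => if h : (i : ℕ) < ℓ then a ⟨i, h⟩
      else x ⟨(i : ℕ) - ℓ, by have := i.isLt; omega⟩)

/-- A strong matching: a set of pairwise vertex-disjoint edges of `G` such that
every edge of `G` with both endpoints among the matched vertices is in `M`. -/
def IsStrongMatching {V : Type*} (G : SimpleGraph V) (M : Set (Sym2 V)) : Prop :=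
  M ⊆ G.edgeSet ∧
  (∀ e₁ ∈ M, ∀ e₂ ∈ M, e₁ ≠ e₂ → ∀ v, v ∈ e₁ → v ∉ e₂) ∧
  (∀ e ∈ G.edgeSet, (∀ v ∈ e, ∃ e' ∈ M, v ∈ e') → e ∈ M)

/-- An `(S,T)`-strong matching: a strong matching each of whose edges has one
endpoint in `S` and the other in `T`. -/
def IsSTStrongMatching {V : Type*} (G : SimpleGraph V) (S T : Set V) (M : Set (Sym2 V)) : Prop :=
  IsStrongMatching G M ∧ ∀ e ∈ M, ∃ u ∈ S, ∃ w ∈ T, e = s(u, w)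

/-- The `n × n` grid graph. -/
def gridGraph (n : ℕ) : SimpleGraph (Fin n × Fin n) :=
  SimpleGraph.fromRel (fun u v =>
    (u.1 = v.1 ∧ (u.2 : ℕ) + 1 = (v.2 : ℕ)) ∨ (u.2 = v.2 ∧ (u.1 : ℕ) + 1 = (v.1 : ℕ)))

/-- The amplitude function of the graph state of `G`, on assignments `V → Bool`. -/
def ampGraphState {V : Type*} [Fintype V] (G : SimpleGraph V) (x : V → Bool) : ℂ :=
  (-1 : ℂ) ^ Set.ncard {e ∈ G.edgeSet | ∀ v ∈ e, x v = true} / Real.sqrt (2 ^ Fintype.card V)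

open Classical in
/-- The coset state of `C ⊆ {0,…,2^n − 1}`: the uniform superposition over `C`. -/
def cosetState (n : ℕ) (C : Set ℕ) : Fin (2 ^ n) → ℂ :=
  fun x => if (x : ℕ) ∈ C then 1 / Real.sqrt (C.ncard) else 0


/-- `X^{a_m} ⊗ ⋯ ⊗ X^{a_1}` (the `j`-th tensor factor is `X` iff `a j = true`). -/
def xString : (m : ℕ) → (Fin m → Bool) → Matrix (Fin (2 ^ m)) (Fin (2 ^ m)) ℂ
  | 0, _ => 1
  | m + 1, a => kron (if a (Fin.last m) then pauliX else 1) (xString m (fun j => a j.castSucc))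

/-- Index splitting. -/
def idxE (m : ℕ) : Fin (2 ^ (m + 1)) ≃ Fin 2 × Fin (2 ^ m) where
  toFun i := (if (i : ℕ) < 2 ^ m then 0 else 1,
    ⟨(i : ℕ) % 2 ^ m, Nat.mod_lt _ (pow_pos (by norm_num) m)⟩)
  invFun p := ⟨(p.1 : ℕ) * 2 ^ m + p.2, by
    have h1 := p.1.isLt
    have h2 := p.2.isLt
    have h3 : (2 : ℕ) ^ (m + 1) = 2 ^ m + 2 ^ m := by rw [pow_succ]; omega
    have : (p.1 : ℕ) = 0 ∨ (p.1 : ℕ) = 1 := by omega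
    rcases this with h | h <;> rw [h] <;> omega⟩
  left_inv i := by
    have h1 := i.isLt
    have h3 : (2 : ℕ) ^ (m + 1) = 2 ^ m + 2 ^ m := by rw [pow_succ]; omega
    apply Fin.ext
    by_cases h : (i : ℕ) < 2 ^ m
    · simp [h, Nat.mod_eq_of_lt h]
    · have : (i : ℕ) % 2 ^ m = i - 2 ^ m := by
        rw [Nat.mod_eq_sub_mod (by omega), Nat.mod_eq_of_lt (by omega)]
      simp [h, this]
      omega
  right_inv p := by
    obtain ⟨a, b⟩ := p
    have h2 := b.isLt
    fin_cases a
    · simp [Nat.mod_eq_of_lt h2]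
    · simp [Nat.mod_eq_of_lt h2]

open Kronecker in
theorem kron_eq {m : ℕ} (A : Matrix (Fin 2) (Fin 2) ℂ)
    (B : Matrix (Fin (2 ^ m)) (Fin (2 ^ m)) ℂ) :
    kron A B = (A ⊗ₖ B).submatrix (idxE m) (idxE m) := rfl

theorem kron_mul {m : ℕ} (A A' : Matrix (Fin 2) (Fin 2) ℂ)
    (B B' : Matrix (Fin (2 ^ m)) (Fin (2 ^ m)) ℂ) :
    kron A B * kron A' B' = kron (A * A') (B * B') := by
  rw [kron_eq, kron_eq, kron_eq, Matrix.submatrix_mul_equiv, Matrix.mul_kronecker_mul]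

theorem kron_one {m : ℕ} :
    kron (1 : Matrix (Fin 2) (Fin 2) ℂ) (1 : Matrix (Fin (2 ^ m)) (Fin (2 ^ m)) ℂ) = 1 := by
  rw [kron_eq, Matrix.one_kronecker_one, Matrix.submatrix_one_equiv]

theorem kron_smul {m : ℕ} (a b : ℂ) (A : Matrix (Fin 2) (Fin 2) ℂ)
    (B : Matrix (Fin (2 ^ m)) (Fin (2 ^ m)) ℂ) :
    kron (a • A) (b • B) = (a * b) • kron A B := by
  ext i j
  simp [kron]
  ring

theorem kron_trace {m : ℕ} (A : Matrix (Fin 2) (Fin 2) ℂ)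
    (B : Matrix (Fin (2 ^ m)) (Fin (2 ^ m)) ℂ) :
    (kron A B).trace = A.trace * B.trace := by
  rw [← Matrix.trace_kronecker, kron_eq]
  exact Equiv.sum_comp (idxE m) (fun i => (Matrix.kroneckerMap (· * ·) A B) i i)

theorem pauli_one_mul_cases {Q Q' : Matrix (Fin 2) (Fin 2) ℂ}
    (h : Q ∈ ({pauliI, pauliX, pauliY, pauliZ} : Set (Matrix (Fin 2) (Fin 2) ℂ)))
    (h' : Q' ∈ ({pauliI, pauliX, pauliY, pauliZ} : Set (Matrix (Fin 2) (Fin 2) ℂ))) :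
    ∃ (k : ℕ), ∃ R ∈ ({pauliI, pauliX, pauliY, pauliZ} : Set (Matrix (Fin 2) (Fin 2) ℂ)),
      Q * Q' = Complex.I ^ k • R := by
  have hXY : pauliX * pauliY = Complex.I ^ 1 • pauliZ := by
    ext i j; fin_cases i <;> fin_cases j <;> simp [pauliX, pauliY, pauliZ]
  have hYX : pauliY * pauliX = Complex.I ^ 3 • pauliZ := by
    ext i j; fin_cases i <;> fin_cases j <;> simp [pauliX, pauliY, pauliZ, Complex.I_pow_three]
  have hYZ : pauliY * pauliZ = Complex.I ^ 1 • pauliX := by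
    ext i j; fin_cases i <;> fin_cases j <;> simp [pauliX, pauliY, pauliZ]
  have hZY : pauliZ * pauliY = Complex.I ^ 3 • pauliX := by
    ext i j; fin_cases i <;> fin_cases j <;> simp [pauliX, pauliY, pauliZ, Complex.I_pow_three]
  have hZX : pauliZ * pauliX = Complex.I ^ 1 • pauliY := by
    ext i j; fin_cases i <;> fin_cases j <;> simp [pauliX, pauliY, pauliZ]
  have hXZ : pauliX * pauliZ = Complex.I ^ 3 • pauliY := by
    ext i j; fin_cases i <;> fin_cases j <;> simp [pauliX, pauliY, pauliZ, Complex.I_pow_three]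
  have hXX : pauliX * pauliX = Complex.I ^ 0 • pauliI := by
    ext i j; fin_cases i <;> fin_cases j <;> simp [pauliX, pauliI]
  have hYY : pauliY * pauliY = Complex.I ^ 0 • pauliI := by
    ext i j; fin_cases i <;> fin_cases j <;> simp [pauliY, pauliI]
  have hZZ : pauliZ * pauliZ = Complex.I ^ 0 • pauliI := by
    ext i j; fin_cases i <;> fin_cases j <;> simp [pauliZ, pauliI]
  have hI1 : ∀ M, pauliI * M = Complex.I ^ 0 • M := by intro M; simp [pauliI]
  have hI2 : ∀ M, M * pauliI = Complex.I ^ 0 • M := by intro M; simp [pauliI]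
  rcases h with rfl | rfl | rfl | rfl
  · exact ⟨_, _, h', hI1 _⟩
  · rcases h' with rfl | rfl | rfl | rfl
    · exact ⟨0, pauliX, by simp, hI2 _⟩
    · exact ⟨0, pauliI, by simp, hXX⟩
    · exact ⟨1, pauliZ, by simp, hXY⟩
    · exact ⟨3, pauliY, by simp, hXZ⟩
  · rcases h' with rfl | rfl | rfl | rfl
    · exact ⟨0, pauliY, by simp, hI2 _⟩
    · exact ⟨3, pauliZ, by simp, hYX⟩
    · exact ⟨0, pauliI, by simp, hYY⟩
    · exact ⟨1, pauliX, by simp, hYZ⟩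
  · rcases h' with rfl | rfl | rfl | rfl
    · exact ⟨0, pauliZ, by simp, hI2 _⟩
    · exact ⟨1, pauliY, by simp, hZX⟩
    · exact ⟨3, pauliX, by simp, hZY⟩
    · exact ⟨0, pauliI, by simp, hZZ⟩

theorem pauli_sq {Q : Matrix (Fin 2) (Fin 2) ℂ}
    (h : Q ∈ ({pauliI, pauliX, pauliY, pauliZ} : Set (Matrix (Fin 2) (Fin 2) ℂ))) :
    Q * Q = 1 := by
  rcases h with rfl | rfl | rfl | rfl
  all_goals
    ext i j; fin_cases i <;> fin_cases j <;> simp [pauliX, pauliY, pauliZ, pauliI]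

theorem pauli_trace {Q : Matrix (Fin 2) (Fin 2) ℂ}
    (h : Q ∈ ({pauliI, pauliX, pauliY, pauliZ} : Set (Matrix (Fin 2) (Fin 2) ℂ))) :
    Q = 1 ∨ Q.trace = 0 := by
  rcases h with rfl | rfl | rfl | rfl
  · exact Or.inl rfl
  all_goals
    right; simp [pauliX, pauliY, pauliZ, Matrix.trace_fin_two]

theorem str_mul : ∀ (n : ℕ) (A B : Matrix (Fin (2 ^ n)) (Fin (2 ^ n)) ℂ),
    IsPauliString n A → IsPauliString n B →
    ∃ (k : ℕ) (R : _), IsPauliString n R ∧ A * B = Complex.I ^ k • R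
  | 0, A, B, hA, hB => ⟨0, 1, rfl, by
      have hA' : A = 1 := hA
      have hB' : B = 1 := hB
      simp [hA', hB']⟩
  | n + 1, A, B, hA, hB => by
      obtain ⟨Q, hQ, A', hA', rfl⟩ := hA
      obtain ⟨Q', hQ', B', hB', rfl⟩ := hB
      obtain ⟨k, R, hR, e⟩ := pauli_one_mul_cases hQ hQ'
      obtain ⟨l, S, hS, e'⟩ := str_mul n A' B' hA' hB'
      exact ⟨k + l, kron R S, ⟨R, hR, S, hS, rfl⟩, by
        rw [kron_mul, e, e', kron_smul, pow_add Complex.I]⟩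

theorem str_sq : ∀ (n : ℕ) (A : Matrix (Fin (2 ^ n)) (Fin (2 ^ n)) ℂ),
    IsPauliString n A → A * A = 1
  | 0, A, hA => by
      have hA' : A = 1 := hA
      simp [hA']
  | n + 1, A, hA => by
      obtain ⟨Q, hQ, A', hA', rfl⟩ := hA
      rw [kron_mul, pauli_sq hQ, str_sq n A' hA', kron_one]

theorem str_trace : ∀ (n : ℕ) (A : Matrix (Fin (2 ^ n)) (Fin (2 ^ n)) ℂ),
    IsPauliString n A → A = 1 ∨ A.trace = 0
  | 0, A, hA => Or.inl hA
  | n + 1, A, hA => by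
      obtain ⟨Q, hQ, A', hA', rfl⟩ := hA
      rw [kron_trace]
      rcases pauli_trace hQ with h | h
      · rcases str_trace n A' hA' with h' | h'
        · left; rw [h, h', kron_one]
        · right; rw [h', mul_zero]
      · right; rw [h, zero_mul]

theorem str_one : ∀ (n : ℕ), IsPauliString n 1
  | 0 => rfl
  | n + 1 => ⟨pauliI, by simp, 1, str_one n, kron_one.symm⟩

theorem inPG_of {n : ℕ} (k : ℕ) {R : Matrix (Fin (2 ^ n)) (Fin (2 ^ n)) ℂ}
    (hR : IsPauliString n R) : InPauliGroup n (Complex.I ^ k • R) :=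
  ⟨⟨k % 4, Nat.mod_lt _ (by norm_num)⟩, R, hR, by
    rw [Complex.I_pow_eq_pow_mod k]⟩

theorem inPG_mul {n : ℕ} {A B : Matrix (Fin (2 ^ n)) (Fin (2 ^ n)) ℂ}
    (hA : InPauliGroup n A) (hB : InPauliGroup n B) : InPauliGroup n (A * B) := by
  obtain ⟨k, A, hA, rfl⟩ := hA
  obtain ⟨l, B, hB, rfl⟩ := hB
  obtain ⟨j, R, hR, e⟩ := str_mul n A B hA hB
  have : (Complex.I ^ (k : ℕ) • A) * (Complex.I ^ (l : ℕ) • B)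
      = Complex.I ^ ((k : ℕ) + l + j) • R := by
    rw [Matrix.smul_mul, Matrix.mul_smul, e, smul_smul, smul_smul, pow_add, pow_add, mul_assoc]
  rw [this]
  exact inPG_of _ hR

theorem inPG_inj {n : ℕ} {A B C : Matrix (Fin (2 ^ n)) (Fin (2 ^ n)) ℂ}
    (hA : InPauliGroup n A) (h : A * B = A * C) : B = C := by
  obtain ⟨k, A, hA, rfl⟩ := hA
  rw [Matrix.smul_mul, Matrix.smul_mul] at h
  have h := smul_right_injective _ (pow_ne_zero (k : ℕ) Complex.I_ne_zero) h
  have h2 : A * (A * B) = A * (A * C) := by rw [show A * B = A * C from h]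
  simpa [← mul_assoc, str_sq n A hA] using h2

/-- A Pauli string commuting with all Pauli-group stabilizers of a stabilizer state `φ`
satisfies `Pφ = ±φ`. -/
theorem commuting_pauli_is_pm_stabilizer (n : ℕ) (φ : Fin (2 ^ n) → ℂ)
    (hφ : IsStabilizerState n φ)
    (P : Matrix (Fin (2 ^ n)) (Fin (2 ^ n)) ℂ) (hP : IsPauliString n P)
    (hcomm : ∀ A : Matrix (Fin (2 ^ n)) (Fin (2 ^ n)) ℂ,
      InPauliGroup n A → A.mulVec φ = φ → A * P = P * A) :
    P.mulVec φ = φ ∨ P.mulVec φ = -φ := by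
  classical
  obtain ⟨hnorm, hcard⟩ := hφ
  have hφ0 : φ ≠ 0 := by
    rintro rfl
    simp at hnorm
  set S : Set (Matrix (Fin (2 ^ n)) (Fin (2 ^ n)) ℂ) :=
    {A | InPauliGroup n A ∧ A.mulVec φ = φ} with hS
  have hfin : S.Finite := Set.finite_of_ncard_ne_zero (by rw [hcard]; positivity)
  set F := hfin.toFinset with hF
  have hFm : ∀ A, A ∈ F ↔ InPauliGroup n A ∧ A.mulVec φ = φ := by
    intro A; simp [hF, hS]
  have hFc : F.card = 2 ^ n := (Set.ncard_eq_toFinset_card S hfin).symm.trans hcard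
  have h1F : (1 : Matrix (Fin (2 ^ n)) (Fin (2 ^ n)) ℂ) ∈ F := by
    rw [hFm]
    refine ⟨?_, by simp⟩
    simpa using inPG_of 0 (str_one n)
  set M : Matrix (Fin (2 ^ n)) (Fin (2 ^ n)) ℂ := ∑ A ∈ F, A with hM
  have hN : ((2 : ℂ) ^ n) ≠ 0 := pow_ne_zero _ two_ne_zero
  have hAM : ∀ A ∈ F, A * M = M := by
    intro A hA
    have hA' := (hFm A).1 hA
    have himg : F.image (fun B => A * B) = F := by
      apply Finset.eq_of_subset_of_card_le
      · intro C hC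
        obtain ⟨B, hB, rfl⟩ := Finset.mem_image.1 hC
        have hB' := (hFm B).1 hB
        rw [hFm]
        exact ⟨inPG_mul hA'.1 hB'.1, by rw [← Matrix.mulVec_mulVec, hB'.2, hA'.2]⟩
      · rw [Finset.card_image_of_injective _ (fun B C h => inPG_inj hA'.1 h)]
    rw [hM, Finset.mul_sum]
    conv_rhs => rw [← himg]
    rw [Finset.sum_image (fun B _ C _ h => inPG_inj hA'.1 h)]
  have hMM : M * M = (2 : ℂ) ^ n • M := by
    conv_lhs => enter [1]; rw [hM]
    rw [Finset.sum_mul, Finset.sum_congr rfl hAM, Finset.sum_const, hFc,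
      ← Nat.cast_smul_eq_nsmul ℂ]
    push_cast
    rfl
  have hMφ : M.mulVec φ = (2 : ℂ) ^ n • φ := by
    rw [hM, Matrix.sum_mulVec, Finset.sum_congr rfl (fun A hA => ((hFm A).1 hA).2),
      Finset.sum_const, hFc, ← Nat.cast_smul_eq_nsmul ℂ]
    push_cast
    rfl
  have htr : M.trace = (2 : ℂ) ^ n := by
    rw [hM, Matrix.trace_sum, Finset.sum_eq_single_of_mem 1 h1F]
    · simp [Matrix.trace_one]
    · intro A hA hne
      obtain ⟨⟨k, R, hR, rfl⟩, hfix⟩ := (hFm A).1 hA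
      rcases str_trace n R hR with h | h
      · exfalso
        apply hne
        subst h
        rw [Matrix.smul_mulVec, Matrix.one_mulVec] at hfix
        obtain ⟨i, hi⟩ := Function.ne_iff.1 hφ0
        have := congrFun hfix i
        simp only [Pi.smul_apply, smul_eq_mul] at this
        have hk : Complex.I ^ (k : ℕ) = 1 := by
          apply mul_right_cancel₀ hi
          rw [this, one_mul]
        rw [hk, one_smul]
      · rw [Matrix.trace_smul, h, smul_zero]
  have hPM : M * P = P * M := by
    rw [hM, Finset.sum_mul, Finset.mul_sum]
    exact Finset.sum_congr rfl (fun A hA => hcomm A ((hFm A).1 hA).1 ((hFm A).1 hA).2)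
  -- the projector
  set f : (Fin (2 ^ n) → ℂ) →ₗ[ℂ] (Fin (2 ^ n) → ℂ) :=
    Matrix.toLin' (((2 : ℂ) ^ n)⁻¹ • M) with hf
  have hfa : ∀ v, f v = ((2 : ℂ) ^ n)⁻¹ • M.mulVec v := by
    intro v
    rw [hf, Matrix.toLin'_apply, Matrix.smul_mulVec]
  have hproj : LinearMap.IsProj (LinearMap.range f) f := by
    refine ⟨fun x => LinearMap.mem_range_self f x, ?_⟩
    rintro _ ⟨y, rfl⟩
    rw [hfa, hfa, Matrix.mulVec_smul, Matrix.mulVec_mulVec, hMM, Matrix.smul_mulVec,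
      smul_smul ((2 : ℂ) ^ n)⁻¹ ((2 : ℂ) ^ n), inv_mul_cancel₀ hN, one_smul]
  have hft := hproj.trace
  have hrank : Module.finrank ℂ (LinearMap.range f) = 1 := by
    rw [hf, Matrix.trace_toLin'_eq, Matrix.trace_smul, htr, smul_eq_mul, inv_mul_cancel₀ hN,
      ← hf] at hft
    exact_mod_cast hft.symm
  have hφr : φ ∈ LinearMap.range f := ⟨φ, by
    rw [hfa, hMφ, smul_smul, inv_mul_cancel₀ hN, one_smul]⟩
  have hPr : P.mulVec φ ∈ LinearMap.range f := ⟨P.mulVec φ, by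
    rw [hfa, Matrix.mulVec_mulVec, hPM, ← Matrix.mulVec_mulVec, hMφ, Matrix.mulVec_smul,
      smul_smul, inv_mul_cancel₀ hN, one_smul]⟩
  obtain ⟨c, hc⟩ := (finrank_eq_one_iff_of_nonzero' (⟨φ, hφr⟩ : LinearMap.range f)
    (fun h => hφ0 (congrArg Subtype.val h))).1 hrank ⟨_, hPr⟩
  have hc : c • φ = P.mulVec φ := congrArg Subtype.val hc
  have hcc : (c * c) • φ = φ := by
    have : P.mulVec (P.mulVec φ) = φ := by
      rw [Matrix.mulVec_mulVec, str_sq n P hP, Matrix.one_mulVec]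
    rw [← hc, Matrix.mulVec_smul, ← hc, smul_smul] at this
    exact this
  obtain ⟨i, hi⟩ := Function.ne_iff.1 hφ0
  have hc1 : c * c = 1 := by
    have := congrFun hcc i
    simp only [Pi.smul_apply, smul_eq_mul] at this
    apply mul_right_cancel₀ hi
    rw [this, one_mul]
  rcases mul_self_eq_one_iff.1 hc1 with h | h
  · left; rw [← hc, h, one_smul]
  · right; rw [← hc, h, neg_one_smul]

end
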